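/- The generating function of unrestricted rigged configurations by cocharge admits the explicit fermionic (Gaussian-binomial) form: Σ_{(ν,J) ∈ RC(λ,B)} q^{cc(ν,J)} = Σ_{m} q^{cc(m) + Σ_{a,j} M_j^{(a)} m_j^{(a)}} Π_{a=1}^{n-1} Π_{j ≥ 1} [ (p_j^{(a)} − M_j^{(a)} + m_j^{(a)}) choose m_j^{(a)} ]_q, where the outer sum runs over all collections of nonnegative integers m = (m_j^{(a)}) satisfying the size constraints Σ_{j} j·m_j^{(a)} = Σ_{i=1}^L s_i min(r_i,a) − Σ_{k=1}^a λ_k and the nonnegativity p_j^{(a)} − M_j^{(a)} ≥ 0 for all a,j with m_j^{(a)} > 0. -/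

import Mathlib

open scoped BigOperators

/-- A (raw) rigged configuration for type `A_{n-1}`: a sequence of partitions
`ν^{(1)},…,ν^{(n-1)}` together with an integer rigging attached to each part;
component `a : Fin (n-1)` is the multiset of pairs `(length of part, rigging)`. -/
abbrev RCConf (n : ℕ) := Fin (n - 1) → Multiset (ℕ × ℤ)

/-- The Cartan matrix pairing `(α_a | α_b)` of `A_{n-1}`:
`2` if `a = b`, `-1` if `|a-b| = 1`, `0` otherwise. -/
def cartan (a b : ℕ) : ℤ := if a = b then 2 else if a + 1 = b ∨ b + 1 = a then -1 else 0

/-- The vacancy numbers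
`p_j^{(a)}(ν) = ∑_{i=1}^L min(j,s_i) δ_{a,r_i} − ∑_b (α_a|α_b) ∑_{k≥1} min(j,k) m_k^{(b)}`.
(The index `a : Fin (n-1)` encodes the root index `a+1 ∈ {1,…,n-1}`, and
`∑_k min(j,k) m_k^{(b)}` is computed as the sum of `min(j, length)` over the
parts of `ν^{(b)}`.) -/
def vac (n L : ℕ) (r s : Fin L → ℕ) (ν : RCConf n) (a : Fin (n - 1)) (j : ℕ) : ℤ :=
  (∑ i, if r i = a.1 + 1 then (min j (s i) : ℤ) else 0)
    - ∑ b : Fin (n - 1), cartan (a.1 + 1) (b.1 + 1) *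
        ((ν b).map fun p => (min j p.1 : ℤ)).sum

/-- The size constraint `|ν^{(a)}| = ∑_{i=1}^L s_i min(r_i,a) − ∑_{j=1}^{a} λ_j`. -/
def sizeEq (n L : ℕ) (r s : Fin L → ℕ) (lam : Fin n → ℤ) (ν : RCConf n) : Prop :=
  ∀ a : Fin (n - 1),
    ((ν a).map fun p => (p.1 : ℤ)).sum
      = (∑ i, (s i : ℤ) * min (r i : ℤ) (a.1 + 1))
        - ∑ k : Fin n, (if k.1 ≤ a.1 then lam k else 0)

/-- `IsURC n L r s M lam ν` : `ν` is an unrestricted rigged configuration in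
`RC(λ,B)`: all parts have positive length, the sizes `|ν^{(a)}|` are as
prescribed by `λ` and `B`, and each rigging `x` of a part of length `j` of
`ν^{(a)}` satisfies `M_j^{(a)} ≤ x ≤ p_j^{(a)}(ν)` where `M` is the given
lower bound (for the Deka–Schilling lower bound this is exactly the set of
unrestricted rigged configurations). -/
def IsURC (n L : ℕ) (r s : Fin L → ℕ) (M : Fin (n - 1) → ℕ → ℤ) (lam : Fin n → ℤ)
    (ν : RCConf n) : Prop :=
  (∀ a, ∀ p ∈ ν a, 1 ≤ p.1) ∧ sizeEq n L r s lam ν ∧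
    (∀ a, ∀ p ∈ ν a, M a p.1 ≤ p.2 ∧ p.2 ≤ vac n L r s ν a p.1)

/-- `cc(ν) = ½ ∑_{a,b} ∑_{j,k} (α_a|α_b) min(j,k) m_j^{(a)} m_k^{(b)}`
(the double sum is always even, so integer division by 2 is exact). -/
def ccShape (n : ℕ) (ν : RCConf n) : ℤ :=
  (∑ a : Fin (n - 1), ∑ b : Fin (n - 1), cartan (a.1 + 1) (b.1 + 1) *
      ((ν a).map fun p => ((ν b).map fun q => (min p.1 q.1 : ℤ)).sum).sum) / 2

/-- The cocharge `cc(ν,J) = cc(ν) + |J|`, where `|J|` is the sum of all riggings. -/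
def cc (n : ℕ) (ν : RCConf n) : ℤ :=
  ccShape n ν + ∑ a : Fin (n - 1), ((ν a).map Prod.snd).sum

/-- Gaussian binomial coefficient `[n choose k]_q` as a polynomial in `q`, via
the Pascal recurrence `[n+1, k+1]_q = [n, k]_q + q^(k+1) [n, k+1]_q`; it is the
generating function of partitions inside a `k × (n-k)` box, and equals
`(q)_n / ((q)_k (q)_{n-k})`. -/
noncomputable def qbinomPoly : ℕ → ℕ → Polynomial ℤ
  | 0, 0 => 1
  | 0, _ + 1 => 0
  | _ + 1, 0 => 1
  | n + 1, k + 1 => qbinomPoly n k + (Polynomial.X) ^ (k + 1) * qbinomPoly n (k + 1)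

/-- The vacancy numbers expressed in terms of the multiplicity data
`m = (m_j^{(a)})`:
`p_j^{(a)}(m) = ∑_i min(j,s_i) δ_{a,r_i} − ∑_b (α_a|α_b) ∑_{k≥1} min(j,k) m_k^{(b)}`. -/
noncomputable def vacM (n L : ℕ) (r s : Fin L → ℕ) (m : Fin (n - 1) → ℕ → ℕ) (a : Fin (n - 1)) (j : ℕ) : ℤ :=
  (∑ i, if r i = a.1 + 1 then (min j (s i) : ℤ) else 0)
    - ∑ b : Fin (n - 1), cartan (a.1 + 1) (b.1 + 1) * ∑ᶠ k : ℕ, (min j k : ℤ) * m b k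

/-- `cc(m) = ½ ∑_{a,b} ∑_{j,k} (α_a|α_b) min(j,k) m_j^{(a)} m_k^{(b)}`. -/
noncomputable def ccM (n : ℕ) (m : Fin (n - 1) → ℕ → ℕ) : ℤ :=
  (∑ a : Fin (n - 1), ∑ b : Fin (n - 1), cartan (a.1 + 1) (b.1 + 1) *
      ∑ᶠ j : ℕ, ∑ᶠ k : ℕ, (min j k : ℤ) * m a j * m b k) / 2

/-!
Group the rigged configurations by their multiplicity array `m`. The bounds on the riggings depend
on `ν` only through `m`, so for fixed `m` the multisets of riggings attached to the parts of each
length of each `ν^{(a)}` can be chosen independently of one another. The `m_j^{(a)}` riggings of the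
parts of length `j` form a multiset with entries in `[M_j^{(a)}, p_j^{(a)}]`; subtracting the lower
bound makes it a partition in an `m_j^{(a)} × (p_j^{(a)} - M_j^{(a)})` box, which accounts for the
factor `q^{M_j^{(a)} m_j^{(a)}}` and the Gaussian binomial. The size constraint leaves only finitely
many arrays `m`, so the generating function is the finite sum of the contributions of the `m`.
-/

open LaurentPolynomial

section LaurentMonomials

variable {R ι : Type*} [CommSemiring R]

theorem T_multiset_sum (s : Multiset ℤ) : (T s.sum : R[T;T⁻¹]) = (s.map T).prod := by
  induction s using Multiset.induction_on with
  | empty => simp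
  | cons a s ih => simp [T_add, ih]

theorem T_sum (s : Finset ι) (f : ι → ℤ) : (T (∑ i ∈ s, f i) : R[T;T⁻¹]) = ∏ i ∈ s, T (f i) := by
  rw [Finset.sum, T_multiset_sum, Multiset.map_map]; rfl

theorem T_finsum {f : ι → ℤ} (hf : f.support.Finite) :
    (T (∑ᶠ i, f i) : R[T;T⁻¹]) = ∏ᶠ i, T (f i) := by
  rw [finsum_eq_sum_of_support_subset (s := hf.toFinset) f (by simp),
    finprod_eq_prod_of_mulSupport_subset (s := hf.toFinset), T_sum]
  intro i hi
  contrapose! hi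
  simp_all

end LaurentMonomials

theorem finsum_mem_univ_pi_prod {ι R : Type*} [Fintype ι] [CommSemiring R] {κ : ι → Type*}
    {A : ∀ i, Set (κ i)} (hA : ∀ i, (A i).Finite) (f : ∀ i, κ i → R) :
    ∑ᶠ x ∈ Set.univ.pi A, ∏ i, f i (x i) = ∏ i, ∑ᶠ y ∈ A i, f i y := by
  classical
  lift A to ∀ i, Finset (κ i) using hA
  simp only [← Fintype.coe_piFinset, finsum_mem_coe_finset, Finset.prod_univ_sum]

section MultisetsOfCard

variable {α : Type*} [DecidableEq α]

/-- The multisets of cardinality `k` with entries in `s`, as a finset. This is `Finset.sym` with the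
cardinality forgotten by the type, so that `k` may vary within a family. -/
def multisetsOfCard (s : Finset α) (k : ℕ) : Finset (Multiset α) :=
  (s.sym k).map ⟨Sym.toMultiset, Sym.coe_injective⟩

theorem mem_multisetsOfCard {s : Finset α} {k : ℕ} {Q : Multiset α} :
    Q ∈ multisetsOfCard s k ↔ Q.card = k ∧ ∀ x ∈ Q, x ∈ s := by
  simp only [multisetsOfCard, Finset.mem_map, Finset.mem_sym_iff, Function.Embedding.coeFn_mk]
  constructor
  · rintro ⟨Q, hQ, rfl⟩
    exact ⟨Q.2, hQ⟩
  · rintro ⟨hcard, hQ⟩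
    exact ⟨⟨Q, hcard⟩, hQ, rfl⟩

theorem multisetsOfCard_zero (s : Finset α) : multisetsOfCard s 0 = {0} := by
  ext Q
  simp +contextual [mem_multisetsOfCard]

theorem multisetsOfCard_singleton (a : α) (k : ℕ) :
    multisetsOfCard {a} k = {Multiset.replicate k a} := by
  ext Q
  simp [mem_multisetsOfCard, Multiset.eq_replicate]

theorem sum_multisetsOfCard_insert_succ {M : Type*} [AddCommMonoid M] {a : α} {s : Finset α}
    (ha : a ∉ s) (k : ℕ) (f : Multiset α → M) :
    ∑ Q ∈ multisetsOfCard (insert a s) (k + 1), f Q =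
      ∑ Q ∈ multisetsOfCard (insert a s) k, f (a ::ₘ Q) +
        ∑ Q ∈ multisetsOfCard s (k + 1), f Q := by
  have hsplit : multisetsOfCard (insert a s) (k + 1) =
      (multisetsOfCard (insert a s) k).image (a ::ₘ ·) ∪ multisetsOfCard s (k + 1) := by
    ext Q
    by_cases haQ : a ∈ Q
    · obtain ⟨Q, rfl⟩ := Multiset.exists_cons_of_mem haQ
      simp [mem_multisetsOfCard, ha]
    · have hne : ∀ Q', a ::ₘ Q' ≠ Q := by rintro Q' rfl; simp at haQ
      grind [mem_multisetsOfCard]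
  rw [hsplit, Finset.sum_union, Finset.sum_image fun _ _ _ _ h => (Multiset.cons_inj_right a).1 h]
  refine Finset.disjoint_left.2 fun Q hQ hQs => ?_
  obtain ⟨Q, -, rfl⟩ := Finset.mem_image.1 hQ
  exact ha ((mem_multisetsOfCard.1 hQs).2 a (Multiset.mem_cons_self a Q))

end MultisetsOfCard

section GaussianBinomial

theorem qbinomPoly_zero_right (n : ℕ) : qbinomPoly n 0 = 1 := by
  cases n <;> rw [qbinomPoly]

theorem qbinomPoly_eq_zero_of_lt {n k : ℕ} (h : n < k) : qbinomPoly n k = 0 := by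
  induction n generalizing k with
  | zero => obtain _ | k := k <;> simp_all [qbinomPoly]
  | succ n ih =>
    obtain _ | k := k
    · simp at h
    · rw [qbinomPoly, ih (by omega), ih (by omega), mul_zero, add_zero]

theorem qbinomPoly_self (n : ℕ) : qbinomPoly n n = 1 := by
  induction n with
  | zero => exact qbinomPoly_zero_right 0
  | succ n ih => rw [qbinomPoly, ih, qbinomPoly_eq_zero_of_lt n.lt_succ_self, mul_zero, add_zero]

theorem sum_multisetsOfCard_Icc_prod_T (lo : ℤ) (p k : ℕ) :
    ∑ Q ∈ multisetsOfCard (Finset.Icc lo (lo + p)) k, (Q.map T).prod =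
      T (lo * k) * Polynomial.toLaurent (qbinomPoly (p + k) k) := by
  induction p generalizing lo k with
  | zero => simp [multisetsOfCard_singleton, qbinomPoly_self, T_pow, mul_comm]
  | succ p ihp =>
    -- Pascal's recurrence splits the multisets according to whether they contain `lo`.
    have hIcc : Finset.Icc lo (lo + (p + 1 : ℕ)) =
        insert lo (Finset.Icc (lo + 1) (lo + 1 + p)) := by
      ext; simp; omega
    induction k with
    | zero => simp [multisetsOfCard_zero, qbinomPoly_zero_right]
    | succ k ihk =>
      have hshift : (T ((lo + 1) * (k + 1 : ℕ)) : ℤ[T;T⁻¹]) =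
          T (lo * (k + 1 : ℕ)) * T 1 ^ (k + 1) := by
        rw [T_pow, ← T_add]; ring_nf
      have hcons : (T lo * T (lo * k) : ℤ[T;T⁻¹]) = T (lo * (k + 1 : ℕ)) := by
        rw [← T_add]; push_cast; ring_nf
      rw [hIcc] at ihk ⊢
      rw [sum_multisetsOfCard_insert_succ (by simp), ihp]
      simp only [Multiset.map_cons, Multiset.prod_cons]
      rw [← Finset.mul_sum, ihk, show p + 1 + (k + 1) = p + 1 + k + 1 by ring,
        show p + (k + 1) = p + 1 + k by ring, qbinomPoly, map_add, map_mul, map_pow,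
        Polynomial.toLaurent_X, ← mul_assoc, hcons, hshift]
      ring

theorem sum_multisetsOfCard_Icc_prod_T_of_le {lo hi : ℤ} {k : ℕ} (h : 0 < k → lo ≤ hi) :
    ∑ Q ∈ multisetsOfCard (Finset.Icc lo hi) k, (Q.map T).prod =
      T (lo * k) * Polynomial.toLaurent (qbinomPoly (hi - lo + k).toNat k) := by
  obtain rfl | hk := k.eq_zero_or_pos
  · simp [multisetsOfCard_zero, qbinomPoly_zero_right]
  · obtain ⟨p, rfl⟩ := Int.le.dest (h hk)
    rw [sum_multisetsOfCard_Icc_prod_T, add_sub_cancel_left, ← Nat.cast_add, Int.toNat_natCast]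

end GaussianBinomial

section LabeledMultisets

variable {α β : Type*}

/-- The labeled multiset in which the labels carried by the copies of `a ∈ s` are those in `x a`. A
pair `(a, b)` is read as a copy of `a` carrying the label `b`. -/
def assembleLabels {s : Finset α} (x : s → Multiset β) : Multiset (α × β) :=
  ∑ a, (x a).map (Prod.mk (a : α))

theorem mem_assembleLabels {s : Finset α} {x : s → Multiset β} {p : α × β} :
    p ∈ assembleLabels x ↔ ∃ h : p.1 ∈ s, p.2 ∈ x ⟨p.1, h⟩ := by
  simp only [assembleLabels, Multiset.mem_sum, Multiset.mem_map, Finset.mem_univ, true_and]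
  constructor
  · rintro ⟨a, b, hb, rfl⟩
    exact ⟨a.2, hb⟩
  · rintro ⟨h, hp⟩
    exact ⟨⟨p.1, h⟩, p.2, hp, rfl⟩

theorem prod_map_assembleLabels {R : Type*} [CommMonoid R] {s : Finset α} (x : s → Multiset β)
    (w : α × β → R) :
    ((assembleLabels x).map w).prod = ∏ a, ((x a).map fun b => w (a, b)).prod := by
  have hmap : (assembleLabels x).map w = ∑ a, (x a).map fun b => w (a, b) := by
    rw [assembleLabels, ← Multiset.coe_mapAddMonoidHom, map_sum]
    simp only [Multiset.coe_mapAddMonoidHom, Multiset.map_map, Function.comp_def]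
  rw [hmap, Multiset.prod_sum]

variable [DecidableEq α]

/-- The multiset of labels carried by the copies of `a` in `P`. -/
def labelsAt (P : Multiset (α × β)) (a : α) : Multiset β :=
  (P.filter fun p => p.1 = a).map Prod.snd

/-- The labeled multisets in which each `a` has multiplicity `m a` and carries labels from `t a`.
With elements read as parts and labels as riggings, these are the rigged partitions with
multiplicities `m`. -/
def labeledMultisets (m : α → ℕ) (t : α → Finset β) : Set (Multiset (α × β)) :=
  {P | (∀ a, (P.map Prod.fst).count a = m a) ∧ ∀ p ∈ P, p.2 ∈ t p.1}

theorem mem_labelsAt {P : Multiset (α × β)} {a : α} {b : β} : b ∈ labelsAt P a ↔ (a, b) ∈ P := by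
  simp [labelsAt]

theorem card_labelsAt (P : Multiset (α × β)) (a : α) :
    (labelsAt P a).card = (P.map Prod.fst).count a := by
  simp [labelsAt, Multiset.count_map, eq_comm]

theorem count_labelsAt [DecidableEq β] (P : Multiset (α × β)) (a : α) (b : β) :
    (labelsAt P a).count b = P.count (a, b) := by
  rw [labelsAt, Multiset.count_map, Multiset.filter_filter, Multiset.count,
    Multiset.countP_eq_card_filter]
  congr 1
  exact Multiset.filter_congr fun p _ => by grind

theorem count_assembleLabels [DecidableEq β] {s : Finset α} (x : s → Multiset β) (a : s) (b : β) :
    (assembleLabels x).count ((a : α), b) = (x a).count b := by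
  rw [assembleLabels, Multiset.count_sum', Finset.sum_eq_single a]
  · exact Multiset.count_map_eq_count' _ _ (Prod.mk_right_injective _) b
  · intro a' _ ha'
    simp [ha']
  · simp

theorem labelsAt_assembleLabels {s : Finset α} (x : s → Multiset β) (a : s) :
    labelsAt (assembleLabels x) a = x a := by
  classical
  ext b
  rw [count_labelsAt, count_assembleLabels]

theorem assembleLabels_labelsAt {s : Finset α} {P : Multiset (α × β)} (hP : ∀ p ∈ P, p.1 ∈ s) :
    assembleLabels (fun a : s => labelsAt P a) = P := by
  classical
  ext ⟨a, b⟩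
  by_cases ha : a ∈ s
  · rw [count_assembleLabels _ ⟨a, ha⟩, count_labelsAt]
  · rw [Multiset.count_eq_zero_of_notMem fun h => ha (mem_assembleLabels.1 h).1,
      Multiset.count_eq_zero_of_notMem fun h => ha (hP _ h)]

variable {m : α → ℕ} {s : Finset α}

theorem fst_mem_of_mem_labeledMultisets {t : α → Finset β} (hm : m.support ⊆ s)
    {P : Multiset (α × β)} (hP : P ∈ labeledMultisets m t) {p : α × β} (hp : p ∈ P) : p.1 ∈ s := by
  apply hm
  rw [Function.mem_support, ← hP.1, Multiset.count_ne_zero]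
  exact Multiset.mem_map_of_mem _ hp

theorem bijOn_labelsAt_labeledMultisets [DecidableEq β] (hm : m.support ⊆ s) (t : α → Finset β) :
    Set.BijOn (fun (P : Multiset (α × β)) (a : s) => labelsAt P a) (labeledMultisets m t)
      (Fintype.piFinset fun a : s => multisetsOfCard (t a) (m a)) := by
  refine Set.InvOn.bijOn (f' := assembleLabels) ⟨?_, ?_⟩ ?_ ?_
  · exact fun P hP => assembleLabels_labelsAt fun p => fst_mem_of_mem_labeledMultisets hm hP
  · exact fun x _ => funext (labelsAt_assembleLabels x)
  · intro P hP
    simp only [Finset.mem_coe, Fintype.mem_piFinset, mem_multisetsOfCard]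
    exact fun a => ⟨(card_labelsAt P a).trans (hP.1 a), fun b hb => hP.2 _ (mem_labelsAt.1 hb)⟩
  · intro x hx
    simp only [Finset.mem_coe, Fintype.mem_piFinset, mem_multisetsOfCard] at hx
    refine ⟨fun a => ?_, fun p hp => ?_⟩
    · by_cases ha : a ∈ s
      · rw [← card_labelsAt, labelsAt_assembleLabels x ⟨a, ha⟩, (hx _).1]
      · rw [Function.notMem_support.1 fun h => ha (hm h), Multiset.count_eq_zero]
        simp [mem_assembleLabels, ha]
    · obtain ⟨h, hp⟩ := mem_assembleLabels.1 hp
      exact (hx ⟨p.1, h⟩).2 _ hp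

theorem finite_labeledMultisets (hm : m.support.Finite) (t : α → Finset β) :
    (labeledMultisets m t).Finite := by
  classical
  exact (bijOn_labelsAt_labeledMultisets (s := hm.toFinset) (by simp) t).finite_iff_finite.2
    (Finset.finite_toSet _)

theorem finsum_labeledMultisets_prod_map [DecidableEq β] {R : Type*} [CommSemiring R]
    (hm : m.support.Finite) (t : α → Finset β) (w : α × β → R) :
    ∑ᶠ P ∈ labeledMultisets m t, (P.map w).prod =
      ∏ᶠ a, ∑ Q ∈ multisetsOfCard (t a) (m a), (Q.map fun b => w (a, b)).prod := by
  have hs : m.support ⊆ hm.toFinset := by simp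
  calc ∑ᶠ P ∈ labeledMultisets m t, (P.map w).prod
      = ∑ x ∈ Fintype.piFinset fun a : hm.toFinset => multisetsOfCard (t a) (m a),
          ∏ a, ((x a).map fun b => w (a, b)).prod := by
        rw [← finsum_mem_coe_finset]
        refine finsum_mem_eq_of_bijOn _ (bijOn_labelsAt_labeledMultisets hs t) fun P hP => ?_
        rw [← prod_map_assembleLabels,
          assembleLabels_labelsAt fun p => fst_mem_of_mem_labeledMultisets hs hP]
    _ = ∏ a ∈ hm.toFinset, ∑ Q ∈ multisetsOfCard (t a) (m a), (Q.map fun b => w (a, b)).prod := by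
        rw [← Finset.prod_coe_sort, Finset.prod_univ_sum]
    _ = _ := by
        refine (finprod_eq_prod_of_mulSupport_subset _ fun a ha => ?_).symm
        contrapose! ha
        have hma : m a = 0 := by simpa using ha
        simp [hma, multisetsOfCard_zero]

theorem finsum_labeledMultisets_Icc_prod_T (hm : m.support.Finite) {lo hi : α → ℤ}
    (h : ∀ a, 0 < m a → lo a ≤ hi a) :
    ∑ᶠ P ∈ labeledMultisets m fun a => Finset.Icc (lo a) (hi a), (P.map fun p => T p.2).prod =
      T (∑ᶠ a, lo a * m a) *
        ∏ᶠ a, Polynomial.toLaurent (qbinomPoly (hi a - lo a + m a).toNat (m a)) := by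
  have hlo : (Function.support fun a => lo a * m a).Finite :=
    hm.subset fun a => by simp
  rw [finsum_labeledMultisets_prod_map hm, T_finsum hlo, ← finprod_mul_distrib]
  · exact finprod_congr fun a => sum_multisetsOfCard_Icc_prod_T_of_le (h a)
  · refine hm.subset fun a ha => ?_
    contrapose! ha
    simp_all
  · refine hm.subset fun a ha => ?_
    contrapose! ha
    simp_all [qbinomPoly_zero_right]

end LabeledMultisets

section PartMultiplicities

variable {n : ℕ}

/-- The multiplicity array `m_j^{(a)}` of a configuration: the number of parts of length `j` in the
component with index `a`. -/
def partMult (ν : RCConf n) (a : Fin (n - 1)) (j : ℕ) : ℕ :=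
  ((ν a).map Prod.fst).count j

theorem partMult_ne_zero {ν : RCConf n} {a : Fin (n - 1)} {j : ℕ} :
    partMult ν a j ≠ 0 ↔ ∃ p ∈ ν a, p.1 = j := by
  rw [partMult, Multiset.count_ne_zero, Multiset.mem_map]

theorem finite_support_partMult (ν : RCConf n) (a : Fin (n - 1)) :
    (partMult ν a).support.Finite :=
  ((ν a).map Prod.fst).toFinset.finite_toSet.subset fun j hj => by
    simpa [partMult_ne_zero] using hj

theorem partMult_zero_right {ν : RCConf n} {a : Fin (n - 1)} :
    partMult ν a 0 = 0 ↔ ∀ p ∈ ν a, 1 ≤ p.1 := by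
  rw [← not_iff_not, ← ne_eq, partMult_ne_zero]
  simp

theorem sum_map_fst_eq_finsum_partMult (ν : RCConf n) (a : Fin (n - 1)) (f : ℕ → ℤ) :
    ((ν a).map fun p => f p.1).sum = ∑ᶠ j, f j * partMult ν a j := by
  rw [← Function.comp_def f Prod.fst, ← Multiset.map_map, Multiset.sum_map_eq_finsum]
  simp only [partMult, nsmul_eq_mul, mul_comm]

theorem vac_eq_vacM (L : ℕ) (r s : Fin L → ℕ) (ν : RCConf n) :
    vac n L r s ν = vacM n L r s (partMult ν) := by
  ext a j
  simp only [vac, vacM, ← sum_map_fst_eq_finsum_partMult]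

theorem ccShape_eq_ccM (ν : RCConf n) : ccShape n ν = ccM n (partMult ν) := by
  have hpair : ∀ a b, ((ν a).map fun p => ((ν b).map fun q => (min p.1 q.1 : ℤ)).sum).sum =
      ∑ᶠ j : ℕ, ∑ᶠ k : ℕ, (min j k : ℤ) * partMult ν a j * partMult ν b k := by
    intro a b
    rw [sum_map_fst_eq_finsum_partMult ν a fun j => ((ν b).map fun q => (min j q.1 : ℤ)).sum]
    refine finsum_congr fun j => ?_
    rw [← Multiset.sum_map_mul_right,
      sum_map_fst_eq_finsum_partMult ν b fun k => (min j k : ℤ) * partMult ν a j]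
  simp only [ccShape, ccM, hpair]

theorem T_cc (ν : RCConf n) :
    (T (cc n ν) : ℤ[T;T⁻¹]) =
      T (ccM n (partMult ν)) * ∏ a, ((ν a).map fun p => T p.2).prod := by
  simp only [cc, T_add, T_sum, T_multiset_sum, ccShape_eq_ccM, Multiset.map_map,
    Function.comp_def]

end PartMultiplicities

section MultiplicityArrays

/-- The size of the `a`-th partition prescribed by `λ` and `B`. -/
def prescribedSize (n L : ℕ) (r s : Fin L → ℕ) (lam : Fin n → ℤ) (a : Fin (n - 1)) : ℤ :=
  (∑ i, (s i : ℤ) * min (r i : ℤ) (a.1 + 1)) - ∑ k : Fin n, (if k.1 ≤ a.1 then lam k else 0)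

/-- The index set of the fermionic sum: finitely supported arrays of multiplicities, placed on
positive lengths, with the prescribed sizes and with `p_j^{(a)} ≥ M_j^{(a)}` wherever a part of
length `j` occurs. -/
def admissibleMults (n L : ℕ) (r s : Fin L → ℕ) (M : Fin (n - 1) → ℕ → ℤ) (lam : Fin n → ℤ) :
    Set (Fin (n - 1) → ℕ → ℕ) :=
  {m | (∀ a, (Function.support (m a)).Finite) ∧ (∀ a, m a 0 = 0) ∧
    (∀ a, ∑ᶠ j : ℕ, (j : ℤ) * m a j = prescribedSize n L r s lam a) ∧
    (∀ a j, 0 < m a j → M a j ≤ vacM n L r s m a j)}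

theorem finite_setOf_finsum_mul_eq (k : ℤ) :
    {f : ℕ → ℕ | f.support.Finite ∧ f 0 = 0 ∧ ∑ᶠ j : ℕ, (j : ℤ) * f j = k}.Finite := by
  refine (Set.finite_range fun (p : k.toNat.Partition) j => p.parts.count j).subset ?_
  rintro f ⟨hf, h0, rfl⟩
  set μ := Finsupp.toMultiset (Finsupp.ofSupportFinite f hf) with hμ
  have hcount : ∀ j, μ.count j = f j := by
    simp [hμ, Finsupp.ofSupportFinite_coe]
  refine ⟨⟨μ, fun {j} hj => ?_, ?_⟩, funext hcount⟩
  · refine Nat.pos_of_ne_zero ?_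
    rintro rfl
    exact Multiset.count_ne_zero.2 hj ((hcount 0).trans h0)
  · have hsum : (μ.sum : ℤ) = ∑ᶠ j : ℕ, (j : ℤ) * f j := by
      rw [Nat.cast_multiset_sum, Multiset.sum_map_eq_finsum]
      simp only [hcount, nsmul_eq_mul, mul_comm]
    rw [← hsum, Int.toNat_natCast]

variable (n L : ℕ) (r s : Fin L → ℕ) (M : Fin (n - 1) → ℕ → ℤ) (lam : Fin n → ℤ)

theorem finite_admissibleMults : (admissibleMults n L r s M lam).Finite :=
  (Set.Finite.pi' fun a => finite_setOf_finsum_mul_eq (prescribedSize n L r s lam a)).subset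
    fun _ hm a => ⟨hm.1 a, hm.2.1 a, hm.2.2.1 a⟩

end MultiplicityArrays

section RiggingsOfMultiplicityArray

variable (n L : ℕ) (r s : Fin L → ℕ) (M : Fin (n - 1) → ℕ → ℤ)

/-- The configurations with multiplicity array `m` whose riggings satisfy
`M_j^{(a)} ≤ x ≤ p_j^{(a)}(m)`; the size constraint is not imposed here. -/
def riggedConfsOver (m : Fin (n - 1) → ℕ → ℕ) : Set (RCConf n) :=
  Set.univ.pi fun a => labeledMultisets (m a) fun j => Finset.Icc (M a j) (vacM n L r s m a j)

variable {n L r s M}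

theorem mem_riggedConfsOver {m : Fin (n - 1) → ℕ → ℕ} {ν : RCConf n} :
    ν ∈ riggedConfsOver n L r s M m ↔
      partMult ν = m ∧ ∀ a, ∀ p ∈ ν a, M a p.1 ≤ p.2 ∧ p.2 ≤ vacM n L r s m a p.1 := by
  simp [riggedConfsOver, labeledMultisets, partMult, funext_iff, forall_and]

theorem finite_riggedConfsOver {m : Fin (n - 1) → ℕ → ℕ} (hm : ∀ a, (m a).support.Finite) :
    (riggedConfsOver n L r s M m).Finite :=
  Set.Finite.pi fun a => finite_labeledMultisets (hm a) _

theorem pairwiseDisjoint_riggedConfsOver (S : Set (Fin (n - 1) → ℕ → ℕ)) :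
    S.PairwiseDisjoint (riggedConfsOver n L r s M) :=
  fun _ _ _ _ hne => Set.disjoint_left.2 fun _ h h' =>
    hne ((mem_riggedConfsOver.1 h).1.symm.trans (mem_riggedConfsOver.1 h').1)

theorem setOf_isURC_eq_biUnion_riggedConfsOver (lam : Fin n → ℤ) :
    {ν | IsURC n L r s M lam ν} =
      ⋃ m ∈ admissibleMults n L r s M lam, riggedConfsOver n L r s M m := by
  ext ν
  have hsize : sizeEq n L r s lam ν ↔
      ∀ a, ∑ᶠ j : ℕ, (j : ℤ) * partMult ν a j = prescribedSize n L r s lam a := by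
    simp only [← sum_map_fst_eq_finsum_partMult ν _ fun j => (j : ℤ), sizeEq, prescribedSize]
  simp only [Set.mem_ofPred_eq, Set.mem_iUnion, exists_prop, mem_riggedConfsOver, IsURC, hsize,
    vac_eq_vacM, ← partMult_zero_right]
  constructor
  · rintro ⟨hpos, hsz, hrig⟩
    refine ⟨_, ⟨finite_support_partMult ν, hpos, hsz, fun a j hj => ?_⟩, rfl, hrig⟩
    obtain ⟨p, hp, rfl⟩ := partMult_ne_zero.1 hj.ne'
    exact (hrig a p hp).1.trans (hrig a p hp).2
  · rintro ⟨_, ⟨-, hpos, hsz, -⟩, rfl, hrig⟩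
    exact ⟨hpos, hsz, hrig⟩

theorem finsum_riggedConfsOver_T_cc {m : Fin (n - 1) → ℕ → ℕ} (hm : ∀ a, (m a).support.Finite)
    (hvac : ∀ a j, 0 < m a j → M a j ≤ vacM n L r s m a j) :
    ∑ᶠ ν ∈ riggedConfsOver n L r s M m, (T (cc n ν) : ℤ[T;T⁻¹]) =
      T (ccM n m + ∑ a, ∑ᶠ j : ℕ, M a j * m a j) *
        ∏ a, ∏ᶠ j : ℕ, Polynomial.toLaurent
          (qbinomPoly (vacM n L r s m a j - M a j + m a j).toNat (m a j)) := by
  calc ∑ᶠ ν ∈ riggedConfsOver n L r s M m, (T (cc n ν) : ℤ[T;T⁻¹])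
      = ∑ᶠ ν ∈ riggedConfsOver n L r s M m,
          T (ccM n m) * ∏ a, ((ν a).map fun p => T p.2).prod :=
        finsum_mem_congr rfl fun ν hν => by rw [T_cc, (mem_riggedConfsOver.1 hν).1]
    _ = T (ccM n m) * ∏ a, ∑ᶠ P ∈ labeledMultisets (m a) fun j =>
          Finset.Icc (M a j) (vacM n L r s m a j), (P.map fun p => T p.2).prod := by
        rw [← mul_finsum_mem' _ _ (finite_riggedConfsOver hm), riggedConfsOver,
          finsum_mem_univ_pi_prod (fun a => finite_labeledMultisets (hm a) _)
            fun _ P => (P.map fun p => T p.2).prod]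
    _ = _ := by
        simp only [finsum_labeledMultisets_Icc_prod_T (hm _) (hvac _), Finset.prod_mul_distrib,
          T_add, T_sum, mul_assoc]

end RiggingsOfMultiplicityArray

theorem riggedConfiguration_genFun_eq_gaussian_sum_general
    (n L : ℕ) (r s : Fin L → ℕ) (lam : Fin n → ℤ) (M : Fin (n - 1) → ℕ → ℤ) :
    ∑ᶠ ν ∈ {ν | IsURC n L r s M lam ν}, (T (cc n ν) : ℤ[T;T⁻¹]) =
      ∑ᶠ m ∈ admissibleMults n L r s M lam,
        T (ccM n m + ∑ a, ∑ᶠ j : ℕ, M a j * m a j) *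
          ∏ a, ∏ᶠ j : ℕ, Polynomial.toLaurent
            (qbinomPoly (vacM n L r s m a j - M a j + m a j).toNat (m a j)) := by
  rw [setOf_isURC_eq_biUnion_riggedConfsOver,
    finsum_mem_biUnion (pairwiseDisjoint_riggedConfsOver _) (finite_admissibleMults n L r s M lam)
      fun m hm => finite_riggedConfsOver hm.1]
  exact finsum_mem_congr rfl fun m hm => finsum_riggedConfsOver_T_cc hm.1 hm.2.2.2

/-- The generating function of unrestricted rigged
configurations by cocharge admits the explicit fermionic (Gaussian-binomial)
form
`∑_{(ν,J) ∈ RC(λ,B)} q^{cc(ν,J)}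
  = ∑_m q^{cc(m) + ∑ M_j^{(a)} m_j^{(a)}} ∏_{a,j} [p_j^{(a)} − M_j^{(a)} + m_j^{(a)}, m_j^{(a)}]_q`,
where the outer sum runs over all collections of nonnegative integers
`m = (m_j^{(a)})` (finitely supported, `j ≥ 1`) satisfying the size
constraints `∑_j j·m_j^{(a)} = ∑_i s_i min(r_i,a) − ∑_{k=1}^a λ_k` and the
nonnegativity `p_j^{(a)} − M_j^{(a)} ≥ 0` whenever `m_j^{(a)} > 0`.  The
identity is stated in the ring of Laurent polynomials `ℤ[q,q⁻¹]` (cocharge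
can be negative), and holds for any choice of lower bounds `M`, in particular
for the Deka–Schilling lower bounds. -/
theorem riggedConfiguration_genFun_eq_gaussian_sum
    (n L : ℕ) (hn : 2 ≤ n) (r s : Fin L → ℕ)
    (hr : ∀ i, 1 ≤ r i ∧ r i ≤ n - 1) (hs : ∀ i, 1 ≤ s i)
    (lam : Fin n → ℕ) (hlam : ∑ k, lam k = ∑ i, r i * s i)
    (M : Fin (n - 1) → ℕ → ℤ) :
    (∑ᶠ ν ∈ {ν : RCConf n | IsURC n L r s M (fun k => (lam k : ℤ)) ν},
        (LaurentPolynomial.T (cc n ν) : LaurentPolynomial ℤ))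
      = ∑ᶠ m ∈ {m : Fin (n - 1) → ℕ → ℕ |
            (∀ a, (Function.support (m a)).Finite) ∧ (∀ a, m a 0 = 0) ∧
            (∀ a : Fin (n - 1), (∑ᶠ j : ℕ, (j : ℤ) * m a j)
              = (∑ i, (s i : ℤ) * min (r i : ℤ) (a.1 + 1))
                - ∑ k : Fin n, (if k.1 ≤ a.1 then (lam k : ℤ) else 0)) ∧
            (∀ a j, 0 < m a j → M a j ≤ vacM n L r s m a j)},
          (LaurentPolynomial.T (ccM n m + ∑ a : Fin (n - 1), ∑ᶠ j : ℕ, M a j * m a j)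
            * ∏ a : Fin (n - 1), ∏ᶠ j : ℕ,
                (Polynomial.toLaurent
                  (qbinomPoly ((vacM n L r s m a j - M a j + m a j).toNat) (m a j))
                  : LaurentPolynomial ℤ)) :=
  riggedConfiguration_genFun_eq_gaussian_sum_general n L r s (fun k => (lam k : ℤ)) M
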